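/- Let a, w1, w2, v1, v2 be positive real numbers. Then the two equalities |a − w1/w2| = |a − v1/v2| and |1/a − w2/w1| = |1/a − v2/v1| hold simultaneously if and only if w1/w2 = v1/v2. -/

import Mathlib

/-!
If `x ≠ y` deviate equally from `a`, then `a` is their arithmetic mean; if moreover `x⁻¹` and `y⁻¹`
deviate equally from `a⁻¹`, then `a` is also their harmonic mean. Substituting
`2 * a = x + y` into `2 * (x * y) = a * (x + y)` gives `(x - y) ^ 2 = 0`.
-/

theorem abs_sub_eq_abs_sub_iff_eq_or_add_eq {G : Type*} [AddCommGroup G] [LinearOrder G]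
    {a x y : G} : |a - x| = |a - y| ↔ x = y ∨ x + y = 2 • a := by
  have neg_case : a - x = -(a - y) ↔ x + y = 2 • a := by
    rw [neg_sub, sub_eq_sub_iff_add_eq_add, two_nsmul, add_comm y x, eq_comm]
  rw [abs_eq_abs, sub_right_inj, neg_case]

theorem eq_of_add_eq_two_nsmul_of_inv_add_inv_eq_two_nsmul {K : Type*} [Field K] {a x y : K}
    (ha : a ≠ 0) (hx : x ≠ 0) (hy : y ≠ 0)
    (hadd : x + y = 2 • a) (hinv : x⁻¹ + y⁻¹ = 2 • a⁻¹) : x = y := by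
  rw [nsmul_eq_mul, Nat.cast_ofNat] at hadd hinv
  have two_mul_mul : 2 * (x * y) = a * (x + y) := by
    field_simp at hinv
    linear_combination -hinv
  have sq_sub : (x - y) ^ 2 = 0 := by
    linear_combination (x + y) * hadd - 2 * two_mul_mul
  exact sub_eq_zero.mp (eq_zero_of_pow_eq_zero sq_sub)

theorem stmt_1_general {K : Type*} [Field K] [LinearOrder K] {a x y : K}
    (ha : a ≠ 0) (hx : x ≠ 0) (hy : y ≠ 0) :
    (|a - x| = |a - y| ∧ |a⁻¹ - x⁻¹| = |a⁻¹ - y⁻¹|) ↔ x = y := by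
  simp only [abs_sub_eq_abs_sub_iff_eq_or_add_eq, inv_inj]
  constructor
  · rintro ⟨hxy | hadd, hxy | hinv⟩
    · exact hxy
    · exact hxy
    · exact hxy
    · exact eq_of_add_eq_two_nsmul_of_inv_add_inv_eq_two_nsmul ha hx hy hadd hinv
  · exact fun hxy ↦ ⟨.inl hxy, .inl hxy⟩

/-- The key pairwise identity: for positive reals, the two absolute-value equalities
hold simultaneously iff the ratios agree. -/
theorem stmt_1 (a w1 w2 v1 v2 : ℝ) (ha : 0 < a) (hw1 : 0 < w1) (hw2 : 0 < w2)
    (hv1 : 0 < v1) (hv2 : 0 < v2) :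
    (|a - w1 / w2| = |a - v1 / v2| ∧ |1 / a - w2 / w1| = |1 / a - v2 / v1|) ↔
      w1 / w2 = v1 / v2 := by
  simpa only [one_div, inv_div] using
    stmt_1_general ha.ne' (div_pos hw1 hw2).ne' (div_pos hv1 hv2).ne'
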